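/- Under the compact nonzero-sum game setup with the quantization condition lim_{δ→0} ω_δ(2δ) = 0 and discount factor β ∈ (0,1), for each δ > 0 let π*_δ be a stationary perfect Nash equilibrium of the finite δ-model. Then for each player i = 1,…,N, sup_{x∈X} |J^i(π*_δ; x) − J*(π^{*,-i}_δ; x)| → 0 as δ → 0, where J^i(π*_δ;·) is the discounted cost of player i in the original model under the extended joint equilibrium policy and J*(π^{*,-i}_δ;·) is the original-model discounted best-response value against the extended policies of the other players. -/

import Mathlib

open MeasureTheory Filter Topology

noncomputable section

/-- Total variation distance between two measures:
`‖μ − ν‖_TV = 2 sup_{D measurable} |μ(D) − ν(D)|`. -/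
def tvDist {α : Type*} [MeasurableSpace α] (μ ν : Measure α) : ℝ :=
  2 * ⨆ D : {D : Set α // MeasurableSet D}, |(μ D.1).toReal - (ν D.1).toReal|

/-- The normalized restriction `ν^z_δ` of `ν` to the quantization cell `Q⁻¹{z}`. -/
def cellMeasure {X : Type*} [MeasurableSpace X] (ν : Measure X) (Q : X → X) (z : X) :
    Measure X :=
  (ν (Q ⁻¹' {z}))⁻¹ • ν.restrict (Q ⁻¹' {z})

/-!
Fix a player and let `J` be the best-response value of the finite model, a function of the quantized
state bounded by `C / (1 - β)`. The integral of `J` against `p(·|x, a)` depends on that kernel only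
through its image under `Q`, so the quantization condition makes `J`'s one-stage cost oscillate
by a vanishing amount `e` on each cell and between neighbouring actions. In equilibrium `J` solves,
up to cell averages, both the evaluation equation of the joint policy and the best-response equation
(with actions restricted to a net). Comparing with the exact fixed points through the
`β`-contraction gives `|Jⁱ - J| ≤ e / (1 - β)` and `|J* - J| ≤ 2 e / (1 - β)`.

The delicate point is measurability: `J*` is an infimum over uncountably many actions. For bounded
continuation costs the one-stage cost is of the first Baire class, so its strict sublevel sets are
`σ`-compact and so are their projections, the strict sublevel sets of the infimum.
-/

section BaireOne

variable {Y Z : Type*} [TopologicalSpace Y] [TopologicalSpace Z] {f g : Y → ℝ} {M : ℝ}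

/-- Functions of the first Baire class: pointwise limits of sequences of continuous functions.
They are closed under sums, compositions with continuous maps and integration in a parameter, and
their infima over a compact parameter are still Borel measurable. -/
def IsBaireOne (f : Y → ℝ) : Prop :=
  ∃ F : ℕ → Y → ℝ, (∀ n, Continuous (F n)) ∧ ∀ y, Tendsto (fun n => F n y) atTop (𝓝 (f y))

namespace IsBaireOne

lemma of_continuous (hf : Continuous f) : IsBaireOne f :=
  ⟨fun _ => f, fun _ => hf, fun _ => tendsto_const_nhds⟩

lemma add (hf : IsBaireOne f) (hg : IsBaireOne g) : IsBaireOne fun y => f y + g y := by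
  obtain ⟨F, hF, hFf⟩ := hf
  obtain ⟨G, hG, hGg⟩ := hg
  exact ⟨fun n y => F n y + G n y, fun n => (hF n).add (hG n), fun y => (hFf y).add (hGg y)⟩

lemma const_mul (hf : IsBaireOne f) (k : ℝ) : IsBaireOne fun y => k * f y := by
  obtain ⟨F, hF, hFf⟩ := hf
  exact ⟨fun n y => k * F n y, fun n => (hF n).const_mul k, fun y => (hFf y).const_mul k⟩

lemma comp (hf : IsBaireOne f) {φ : Z → Y} (hφ : Continuous φ) : IsBaireOne fun z => f (φ z) := by
  obtain ⟨F, hF, hFf⟩ := hf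
  exact ⟨fun n z => F n (φ z), fun n => (hF n).comp hφ, fun z => hFf (φ z)⟩

lemma indicator_of_isClosed [HasOuterApproxClosed Y] (hf : Continuous f) {U : Set Y}
    (hU : IsClosed U) : IsBaireOne (U.indicator f) := by
  refine ⟨fun n y => hU.apprSeq n y * f y, fun n => by fun_prop, fun y => ?_⟩
  have hlim := tendsto_pi_nhds.1 (HasOuterApproxClosed.tendsto_apprSeq hU) y
  have hmul := (NNReal.tendsto_coe.2 hlim).mul_const (f y)
  by_cases hy : y ∈ U <;> simpa [hy] using hmul

lemma measurable [MeasurableSpace Y] [OpensMeasurableSpace Y] (hf : IsBaireOne f) :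
    Measurable f := by
  obtain ⟨F, hF, hFf⟩ := hf
  exact measurable_of_tendsto_metrizable (fun n => (hF n).measurable) (tendsto_pi_nhds.2 hFf)

lemma isSigmaCompact_setOf_lt [CompactSpace Y] (hf : IsBaireOne f) (t : ℝ) :
    IsSigmaCompact {y | f y < t} := by
  obtain ⟨F, hF, hFf⟩ := hf
  have hunion : {y | f y < t} =
      ⋃ k : {r : ℚ // (r : ℝ) < t} × ℕ, ⋂ m ≥ k.2, {y | F m y ≤ k.1.1} := by
    ext y
    simp only [Set.mem_ofPred_eq, Set.mem_iUnion, Set.mem_iInter, Prod.exists, Subtype.exists]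
    constructor
    · intro hy
      obtain ⟨r, hfr, hrt⟩ := exists_rat_btwn hy
      obtain ⟨n, hn⟩ := eventually_atTop.1 ((hFf y).eventually_le_const hfr)
      exact ⟨r, hrt, n, hn⟩
    · rintro ⟨r, hrt, n, hn⟩
      exact (le_of_tendsto (hFf y) (eventually_atTop.2 ⟨n, hn⟩)).trans_lt hrt
  rw [hunion]
  refine isSigmaCompact_iUnion _ fun k => IsCompact.isSigmaCompact (IsClosed.isCompact ?_)
  exact isClosed_biInter fun m _ => isClosed_le (hF m) continuous_const

lemma measurable_iInf [CompactSpace Y] [CompactSpace Z] [T2Space Y] [MeasurableSpace Y]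
    [OpensMeasurableSpace Y] [Nonempty Z] {f : Y × Z → ℝ} (hf : IsBaireOne f)
    (hM : ∀ q, M ≤ f q) : Measurable fun y => ⨅ z, f (y, z) := by
  refine measurable_of_Iio fun t => ?_
  have hproj : (fun y => ⨅ z, f (y, z)) ⁻¹' Set.Iio t = Prod.fst '' {q | f q < t} := by
    ext y
    have hbdd : BddBelow (Set.range fun z => f (y, z)) :=
      ⟨M, Set.forall_mem_range.2 fun z => hM (y, z)⟩
    simp [ciInf_lt_iff hbdd]
  rw [hproj]
  obtain ⟨K, hK, hKU⟩ := (hf.isSigmaCompact_setOf_lt t).image continuous_fst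
  rw [← hKU]
  exact MeasurableSet.iUnion fun n => (hK n).measurableSet

lemma integral [FirstCountableTopology Y] [MeasurableSpace Z] [OpensMeasurableSpace Z]
    (μ : Measure Z) [IsFiniteMeasure μ] {f : Y × Z → ℝ} (hf : IsBaireOne f)
    (hM : ∀ q, |f q| ≤ M) : IsBaireOne fun y => ∫ z, f (y, z) ∂μ := by
  obtain ⟨F, hF, hFf⟩ := hf
  let G : ℕ → Y × Z → ℝ := fun n q => max (-M) (min M (F n q))
  have hG : ∀ n, Continuous (G n) := fun n => by fun_prop
  have hGM : ∀ n q, ‖G n q‖ ≤ |M| := fun n q =>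
    abs_le.2 ⟨(neg_le_neg (le_abs_self M)).trans (le_max_left _ _),
      max_le (neg_le_abs M) ((min_le_left _ _).trans (le_abs_self M))⟩
  have hGf : ∀ q, Tendsto (fun n => G n q) atTop (𝓝 (f q)) := fun q => by
    have hclip : max (-M) (min M (f q)) = f q := by
      rw [min_eq_right (abs_le.1 (hM q)).2, max_eq_right (abs_le.1 (hM q)).1]
    have hlim : Tendsto (fun n => G n q) atTop (𝓝 (max (-M) (min M (f q)))) :=
      tendsto_const_nhds.max (tendsto_const_nhds.min (hFf q))
    rwa [hclip] at hlim
  have hmeas : ∀ n y, AEStronglyMeasurable (fun z => G n (y, z)) μ := fun n y =>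
    ((hG n).comp (Continuous.prodMk_right y)).aestronglyMeasurable
  refine ⟨fun n y => ∫ z, G n (y, z) ∂μ, fun n => ?_, fun y => ?_⟩
  · exact continuous_of_dominated (hmeas n) (fun y => ae_of_all _ fun z => hGM n (y, z))
      (integrable_const |M|) (ae_of_all _ fun z => (hG n).comp (Continuous.prodMk_left z))
  · exact tendsto_integral_of_dominated_convergence (fun _ => |M|) (fun n => hmeas n y)
      (integrable_const |M|) (fun n => ae_of_all _ fun z => hGM n (y, z))
      (ae_of_all _ fun z => hGf (y, z))

end IsBaireOne

end BaireOne

section SetwiseContinuous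

variable {X Y : Type*} [MeasurableSpace X] [TopologicalSpace Y] {p : Y → Measure X} {J : X → ℝ}
  {M : ℝ}

/-- Setwise continuity of a family of finite measures: every measurable set has continuously
varying mass. -/
def IsSetwiseContinuous (p : Y → Measure X) : Prop :=
  ∀ D : Set X, MeasurableSet D → Continuous fun y => (p y).real D

namespace IsSetwiseContinuous

-- The layer-cake formula writes the integral of `J + M ≥ 0` as an integral of masses of
-- superlevel sets, each of which varies continuously.
lemma continuous_integral [FirstCountableTopology Y] [∀ y, IsProbabilityMeasure (p y)]
    (hp : IsSetwiseContinuous p) (hJ : Measurable J) (hM : ∀ x, |J x| ≤ M) :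
    Continuous fun y => ∫ x, J x ∂p y := by
  have hint : ∀ y, Integrable J (p y) := fun y =>
    Integrable.of_bound hJ.aestronglyMeasurable M (ae_of_all _ hM)
  have hlayer : ∀ y, ∫ x, J x ∂p y =
      (∫ t in Set.Ioc 0 (M + M), (p y).real {x | t ≤ J x + M}) - M := fun y => by
    have hshift : ∫ x, J x + M ∂p y = ∫ t in Set.Ioc 0 (M + M), (p y).real {x | t ≤ J x + M} :=
      ((hint y).add (integrable_const M)).integral_eq_integral_Ioc_meas_le
        (ae_of_all _ fun x => neg_le_iff_add_nonneg.1 (abs_le.1 (hM x)).1)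
        (ae_of_all _ fun x => add_le_add_left (abs_le.1 (hM x)).2 M)
    rw [← hshift, integral_add (hint y) (integrable_const M), integral_const, probReal_univ,
      one_smul, add_sub_cancel_right]
  simp only [hlayer]
  refine Continuous.sub ?_ continuous_const
  refine continuous_of_dominated (bound := fun _ => 1) (fun y => ?_)
    (fun y => ae_of_all _ fun t => ?_) (integrable_const _) (ae_of_all _ fun t => ?_)
  · have hanti : Antitone fun t => (p y).real {x | t ≤ J x + M} := fun s t hst =>
      measureReal_mono fun x hx => hst.trans hx
    exact hanti.measurable.aestronglyMeasurable
  · rw [Real.norm_of_nonneg measureReal_nonneg]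
    exact measureReal_le_one
  · exact hp _ (measurableSet_le measurable_const (hJ.add_const M))

lemma absolutelyContinuous_sum_of_mem_closure [∀ y, IsFiniteMeasure (p y)]
    (hp : IsSetwiseContinuous p) {t : Set Y} {y : Y} (hy : y ∈ closure t) :
    p y ≪ Measure.sum fun r : t => p r := by
  refine Measure.AbsolutelyContinuous.mk fun D hD hD0 => ?_
  have hnull : ∀ r ∈ t, (p r).real D = 0 := fun r hr => by
    have hle := Measure.le_sum (fun r : t => p r) ⟨r, hr⟩ D
    simp only [measureReal_def, nonpos_iff_eq_zero.1 (hle.trans hD0.le), ENNReal.toReal_zero]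
  have hclosed : IsClosed {r | (p r).real D = 0} := isClosed_eq (hp D hD) continuous_const
  exact (measureReal_eq_zero_iff).1 (closure_minimal hnull hclosed hy)

-- A countable dense subset of `U` yields one measure dominating `p y` for all `y ∈ closure U`;
-- a measurable version of `J` for that measure serves all of them.
lemma exists_measurable_ae_eq [TopologicalSpace.PseudoMetrizableSpace Y]
    [TopologicalSpace.SeparableSpace Y] [∀ y, IsFiniteMeasure (p y)] (hp : IsSetwiseContinuous p)
    (hM : ∀ x, |J x| ≤ M) {U : Set Y} (hU : ∀ y ∈ U, AEStronglyMeasurable J (p y)) :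
    ∃ h : X → ℝ, Measurable h ∧ (∀ x, |h x| ≤ |M|) ∧ ∀ y ∈ closure U, J =ᵐ[p y] h := by
  obtain ⟨t, htU, htc, hUt⟩ :=
    (TopologicalSpace.IsSeparable.of_separableSpace U).exists_countable_dense_subset
  have : Countable t := htc.to_subtype
  have hJ : AEStronglyMeasurable J (Measure.sum fun r : t => p r) :=
    aestronglyMeasurable_sum_measure_iff.2 fun r => hU r (htU r.2)
  have hmk : Measurable (hJ.mk J) := hJ.stronglyMeasurable_mk.measurable
  refine ⟨{x | |hJ.mk J x| ≤ M}.indicator (hJ.mk J),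
    hmk.indicator (measurableSet_le hmk.abs measurable_const), fun x => ?_, fun y hy => ?_⟩
  · by_cases hx : |hJ.mk J x| ≤ M
    · simpa [hx] using hx.trans (le_abs_self M)
    · simp [hx]
  · have hyt : y ∈ closure t := closure_minimal hUt isClosed_closure hy
    filter_upwards [(hp.absolutelyContinuous_sum_of_mem_closure hyt).ae_eq hJ.ae_eq_mk] with x hx
    rw [Set.indicator_of_mem (by simpa [← hx] using hM x), hx]

-- Where `J` is not a.e. strongly measurable the Bochner integral is `0` by convention; the parameters
-- at which `J` is form a closed set, on which the integral is continuous.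
lemma isBaireOne_integral [TopologicalSpace.PseudoMetrizableSpace Y]
    [TopologicalSpace.SeparableSpace Y] [∀ y, IsProbabilityMeasure (p y)]
    (hp : IsSetwiseContinuous p) (hM : ∀ x, |J x| ≤ M) : IsBaireOne fun y => ∫ x, J x ∂p y := by
  let := TopologicalSpace.pseudoMetrizableSpacePseudoMetric Y
  let U : Set Y := {y | AEStronglyMeasurable J (p y)}
  obtain ⟨h, hh, hhM, hJh⟩ := hp.exists_measurable_ae_eq hM (U := U) fun _ hy => hy
  have hU : IsClosed U := isClosed_of_closure_subset fun y hy =>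
    hh.aestronglyMeasurable.congr (hJh y hy).symm
  have hind : (fun y => ∫ x, J x ∂p y) = U.indicator fun y => ∫ x, h x ∂p y := by
    ext y
    by_cases hy : y ∈ U
    · rw [Set.indicator_of_mem hy, integral_congr_ae (hJh y (subset_closure hy))]
    · rw [Set.indicator_of_notMem hy, integral_non_aestronglyMeasurable hy]
  rw [hind]
  exact IsBaireOne.indicator_of_isClosed (hp.continuous_integral hh hhM) hU

end IsSetwiseContinuous

end SetwiseContinuous

section TotalVariation

variable {α : Type*} [MeasurableSpace α] {μ ν : Measure α} {f : α → ℝ} {M : ℝ}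

lemma abs_measureReal_sub_le_one [IsProbabilityMeasure μ] [IsProbabilityMeasure ν] (D : Set α) :
    |μ.real D - ν.real D| ≤ 1 :=
  abs_sub_le_of_nonneg_of_le measureReal_nonneg measureReal_le_one measureReal_nonneg
    measureReal_le_one

lemma two_mul_abs_sub_le_tvDist [IsProbabilityMeasure μ] [IsProbabilityMeasure ν] {D : Set α}
    (hD : MeasurableSet D) : 2 * |μ.real D - ν.real D| ≤ tvDist μ ν := by
  have hbdd : BddAbove (Set.range fun D : {D : Set α // MeasurableSet D} =>
      |μ.real D.1 - ν.real D.1|) :=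
    ⟨1, Set.forall_mem_range.2 fun D => abs_measureReal_sub_le_one D.1⟩
  exact mul_le_mul_of_nonneg_left (le_ciSup hbdd ⟨D, hD⟩) zero_le_two

lemma tvDist_le_two [IsProbabilityMeasure μ] [IsProbabilityMeasure ν] : tvDist μ ν ≤ 2 := by
  have hsup : ⨆ D : {D : Set α // MeasurableSet D}, |μ.real D.1 - ν.real D.1| ≤ 1 :=
    Real.iSup_le (fun D => abs_measureReal_sub_le_one D.1) zero_le_one
  calc tvDist μ ν ≤ 2 * 1 := mul_le_mul_of_nonneg_left hsup zero_le_two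
    _ = 2 := mul_one 2

-- Monotonicity in the measure, applied to the nonnegative functions `M - f` and `M + f`.
lemma abs_integral_sub_le_of_measure_le [IsFiniteMeasure μ] (hνμ : ν ≤ μ) (hf : Measurable f)
    (hM : ∀ x, |f x| ≤ M) :
    |∫ x, f x ∂μ - ∫ x, f x ∂ν| ≤ M * (μ.real Set.univ - ν.real Set.univ) := by
  have : IsFiniteMeasure ν := isFiniteMeasure_of_le μ hνμ
  have hfμ : Integrable f μ := Integrable.of_bound hf.aestronglyMeasurable M (ae_of_all _ hM)
  have hfν : Integrable f ν := hfμ.mono_measure hνμ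
  have hsub : ∫ x, M - f x ∂ν ≤ ∫ x, M - f x ∂μ :=
    integral_mono_measure hνμ (ae_of_all _ fun x => sub_nonneg.2 (abs_le.1 (hM x)).2)
      ((integrable_const M).sub hfμ)
  have hadd : ∫ x, M + f x ∂ν ≤ ∫ x, M + f x ∂μ :=
    integral_mono_measure hνμ
      (ae_of_all _ fun x => neg_le_iff_add_nonneg'.1 (abs_le.1 (hM x)).1)
      ((integrable_const M).add hfμ)
  rw [integral_sub (integrable_const M) hfν, integral_sub (integrable_const M) hfμ,
    integral_const, integral_const, smul_eq_mul, smul_eq_mul] at hsub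
  rw [integral_add (integrable_const M) hfν, integral_add (integrable_const M) hfμ,
    integral_const, integral_const, smul_eq_mul, smul_eq_mul] at hadd
  exact abs_le.2 ⟨by linarith, by linarith⟩

lemma abs_integral_sub_le_mul_tvDist [IsProbabilityMeasure μ] [IsProbabilityMeasure ν]
    (hf : Measurable f) (hM : ∀ x, |f x| ≤ M) :
    |∫ x, f x ∂μ - ∫ x, f x ∂ν| ≤ M * tvDist μ ν := by
  obtain ⟨s, hs, hνμ, hμν⟩ := hahn_decomposition μ ν
  have hint : ∀ (ρ : Measure α) [IsProbabilityMeasure ρ], Integrable f ρ := fun ρ _ =>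
    Integrable.of_bound hf.aestronglyMeasurable M (ae_of_all _ hM)
  have hM0 : 0 ≤ M := by
    obtain ⟨x⟩ := μ.nonempty_of_neZero
    exact (abs_nonneg _).trans (hM x)
  have hs_le : ν.restrict s ≤ μ.restrict s := Measure.le_iff.2 fun t ht => by
    simpa only [Measure.restrict_apply ht] using hνμ _ (ht.inter hs) Set.inter_subset_right
  have hsc_le : μ.restrict sᶜ ≤ ν.restrict sᶜ := Measure.le_iff.2 fun t ht => by
    simpa only [Measure.restrict_apply ht] using hμν _ (ht.inter hs.compl) Set.inter_subset_right
  have hpos := abs_integral_sub_le_of_measure_le hs_le hf hM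
  have hneg := abs_integral_sub_le_of_measure_le hsc_le hf hM
  simp only [measureReal_restrict_apply_univ] at hpos hneg
  rw [abs_sub_comm] at hneg
  have htv : (μ.real s - ν.real s) + (ν.real sᶜ - μ.real sᶜ) ≤ tvDist μ ν := by
    rw [probReal_compl_eq_one_sub hs, probReal_compl_eq_one_sub hs]
    linarith [two_mul_abs_sub_le_tvDist (μ := μ) (ν := ν) hs, le_abs_self (μ.real s - ν.real s)]
  rw [← integral_add_compl hs (hint μ), ← integral_add_compl hs (hint ν), add_sub_add_comm]
  calc _ ≤ M * (μ.real s - ν.real s) + M * (ν.real sᶜ - μ.real sᶜ) :=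
        (abs_add_le _ _).trans (add_le_add hpos hneg)
    _ = M * ((μ.real s - ν.real s) + (ν.real sᶜ - μ.real sᶜ)) := (mul_add _ _ _).symm
    _ ≤ M * tvDist μ ν := mul_le_mul_of_nonneg_left htv hM0

end TotalVariation

section Comparison

variable {X A : Type*}

lemma abs_le_div_one_sub_of_contraction {u : X → ℝ} {M k β : ℝ} (hM : ∀ x, |u x| ≤ M)
    (hβ : β < 1) (h : ∀ s, (∀ x, |u x| ≤ s) → ∀ x, |u x| ≤ k + β * s) (x : X) :
    |u x| ≤ k / (1 - β) := by
  have : Nonempty X := ⟨x⟩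
  have hsup : ∀ y, |u y| ≤ ⨆ z, |u z| :=
    le_ciSup (f := fun z => |u z|) ⟨M, Set.forall_mem_range.2 hM⟩
  have hself : ⨆ z, |u z| ≤ k + β * ⨆ z, |u z| := ciSup_le (h _ hsup)
  rw [le_div_iff₀ (sub_pos.2 hβ)]
  calc |u x| * (1 - β) ≤ (⨆ z, |u z|) * (1 - β) :=
        mul_le_mul_of_nonneg_right (hsup x) (sub_pos.2 hβ).le
    _ ≤ k := by linarith

lemma abs_integral_sub_integral_le [MeasurableSpace X] {μ : Measure X} [IsProbabilityMeasure μ]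
    {f g : X → ℝ} {k : ℝ} (hf : Integrable f μ) (hg : Integrable g μ)
    (h : ∀ᵐ x ∂μ, |f x - g x| ≤ k) : |∫ x, f x ∂μ - ∫ x, g x ∂μ| ≤ k := by
  rw [← integral_sub hf hg]
  simpa using norm_integral_le_of_norm_le_const (f := fun x => f x - g x) h

lemma abs_iInf_sub_sInf_le [PseudoMetricSpace A] [Nonempty A] {B : Finset A} {δ k : ℝ}
    {F K : A → ℝ} (hB : ∀ a, ∃ b ∈ B, dist a b ≤ δ) (hF : BddBelow (Set.range F))
    (hFK : ∀ a b, dist a b ≤ δ → |F a - K b| ≤ k) :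
    |(⨅ a, F a) - sInf {v | ∃ b ∈ B, v = K b}| ≤ k := by
  have hset : {v | ∃ b ∈ B, v = K b} = K '' B := by
    ext v
    simp only [Set.mem_ofPred_eq, Set.mem_image, Finset.mem_coe, eq_comm]
  obtain ⟨b₀, hb₀, hδ⟩ := hB (Classical.arbitrary A)
  have hbdd : BddBelow (K '' B) := (B.finite_toSet.image K).bddBelow
  rw [hset, abs_le]
  constructor
  · suffices sInf (K '' B) - k ≤ ⨅ a, F a by linarith
    refine le_ciInf fun a => ?_
    obtain ⟨b, hb, hab⟩ := hB a
    linarith [csInf_le hbdd ⟨b, hb, rfl⟩, (abs_le.1 (hFK a b hab)).1]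
  · suffices (⨅ a, F a) - k ≤ sInf (K '' B) by linarith
    refine le_csInf ⟨_, b₀, hb₀, rfl⟩ (Set.forall_mem_image.2 fun b _ => ?_)
    have hbb : dist b b ≤ δ := (dist_self b).trans_le (dist_nonneg.trans hδ)
    linarith [ciInf_le hF b, (abs_le.1 (hFK b b hbb)).2]

end Comparison

section Quantization

variable {X : Type*} [PseudoMetricSpace X] [MeasurableSpace X] {S : Finset X} {Q : X → X}
  {ν : Measure X} {δ : ℝ}

/-- A quantization of mesh `δ`: a measurable map `Q` into the finite set `S` that moves no point by
more than `δ`, with a finite weighting measure `ν` charging every cell `Q⁻¹{z}`, `z ∈ S`. -/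
structure IsQuantization (S : Finset X) (Q : X → X) (ν : Measure X) (δ : ℝ) : Prop where
  measurable : Measurable Q
  mem : ∀ x, Q x ∈ S
  dist_le : ∀ x, dist x (Q x) ≤ δ
  isFiniteMeasure : IsFiniteMeasure ν
  cell_pos : ∀ z ∈ S, 0 < ν (Q ⁻¹' {z})

namespace IsQuantization

lemma of_dist_le_dist (hQ : Measurable Q) (hmem : ∀ x, Q x ∈ S)
    (hnear : ∀ x, ∀ z ∈ S, dist x (Q x) ≤ dist x z) (hnet : ∀ x, ∃ z ∈ S, dist x z ≤ δ)
    (hν : IsFiniteMeasure ν) (hpos : ∀ z ∈ S, 0 < ν (Q ⁻¹' {z})) : IsQuantization S Q ν δ where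
  measurable := hQ
  mem := hmem
  dist_le x := (hnet x).elim fun z hz => (hnear x z hz.1).trans hz.2
  isFiniteMeasure := hν
  cell_pos := hpos

lemma dist_le_two_mul (hQ : IsQuantization S Q ν δ) {x y : X} (hxy : Q x = Q y) :
    dist x y ≤ 2 * δ := by
  have htri := dist_triangle_right x y (Q x)
  linarith [hQ.dist_le x, hxy ▸ hQ.dist_le y]

lemma measurable_bind [MeasurableSingletonClass X] (hQ : IsQuantization S Q ν δ) {Z : Type*}
    [MeasurableSpace Z] {F : X → X → Z} (hF : ∀ z, Measurable (F z)) :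
    Measurable fun x => F (Q x) x :=
  SimpleFunc.measurable_bind
    ⟨Q, fun z => hQ.measurable (measurableSet_singleton z),
      S.finite_toSet.subset (Set.range_subset_iff.2 hQ.mem)⟩ F hF

lemma measurable_of_eq_comp [MeasurableSingletonClass X] (hQ : IsQuantization S Q ν δ) {J : X → ℝ}
    (hJ : ∀ x, J x = J (Q x)) : Measurable J := by
  rw [funext hJ]
  exact hQ.measurable_bind fun z => measurable_const (a := J z)

lemma exists_abs_le (hQ : IsQuantization S Q ν δ) {J : X → ℝ} (hJ : ∀ x, J x = J (Q x)) :
    ∃ M, ∀ x, |J x| ≤ M :=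
  ⟨∑ z ∈ S, |J z|, fun x => hJ x ▸
    Finset.single_le_sum (f := fun z => |J z|) (fun _ _ => abs_nonneg _) (hQ.mem x)⟩

lemma isProbabilityMeasure_cellMeasure (hQ : IsQuantization S Q ν δ) (x : X) :
    IsProbabilityMeasure (cellMeasure ν Q (Q x)) :=
  have := hQ.isFiniteMeasure
  ProbabilityTheory.cond_isProbabilityMeasure (hQ.cell_pos _ (hQ.mem x)).ne'

lemma abs_sub_integral_cellMeasure_le [MeasurableSingletonClass X] (hQ : IsQuantization S Q ν δ)
    {f : X → ℝ} {M r k : ℝ} (hf : Measurable f) (hM : ∀ x, |f x| ≤ M) {x : X}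
    (h : ∀ y, Q y = Q x → |r - f y| ≤ k) :
    |r - ∫ y, f y ∂cellMeasure ν Q (Q x)| ≤ k := by
  have := hQ.isProbabilityMeasure_cellMeasure x
  have hcell : ∀ᵐ y ∂cellMeasure ν Q (Q x), Q y = Q x :=
    Measure.ae_smul_measure (ae_restrict_mem (hQ.measurable (measurableSet_singleton _))) _
  simpa using abs_integral_sub_integral_le (integrable_const r)
    (Integrable.of_bound hf.aestronglyMeasurable M (ae_of_all _ hM)) (hcell.mono h)

end IsQuantization

end Quantization

section Oscillation

variable {X E : Type*} [PseudoMetricSpace X] [PseudoMetricSpace E]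

/-- `f` varies by at most `e` between state-action pairs at distance at most `r`, for the sum metric
on pairs used by the modulus `ω_δ`. -/
def OscillationLE (f : X → E → ℝ)
    (r e : ℝ) : Prop :=
  ∀ x y a b, dist x y + dist a b ≤ r → |f x a - f y b| ≤ e

lemma eventually_oscillationLE [CompactSpace X] [CompactSpace E] {c : X → E → ℝ} {e : ℝ}
    (hc : Continuous fun q : X × E => c q.1 q.2) (he : 0 < e) :
    ∀ᶠ δ in 𝓝[>] (0 : ℝ), OscillationLE c (2 * δ) e := by
  obtain ⟨η, hη, hclose⟩ := Metric.uniformContinuous_iff.1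
    (CompactSpace.uniformContinuous_of_continuous hc) e he
  have hsmall : ∀ᶠ δ in 𝓝[>] (0 : ℝ), δ < η / 2 :=
    eventually_nhdsWithin_of_eventually_nhds (eventually_lt_nhds (half_pos hη))
  filter_upwards [hsmall] with δ hδ x y a b hxy
  have hdist : dist (x, a) (y, b) < η :=
    max_lt (by linarith [dist_nonneg (x := a) (y := b)])
      (by linarith [dist_nonneg (x := x) (y := y)])
  exact (hclose hdist).le

end Oscillation

section ActionCost

variable {X E : Type*} [MeasurableSpace X] {c : X → E → ℝ} {p : X → E → Measure X}
  {β C M s r e : ℝ} {J J' : X → ℝ}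

/-- The expected discounted cost of playing `b` in state `x` when the continuation cost is `J`. -/
def actionCost (c : X → E → ℝ) (p : X → E → Measure X) (β : ℝ) (J : X → ℝ) (x : X) (b : E) : ℝ :=
  c x b + β * ∫ y, J y ∂p x b

lemma abs_actionCost_le [∀ x b, IsProbabilityMeasure (p x b)] (hC : ∀ x b, |c x b| ≤ C)
    (hM : ∀ x, |J x| ≤ M) (x : X) (b : E) : |actionCost c p β J x b| ≤ C + |β| * M := by
  have hint : |∫ y, J y ∂p x b| ≤ M := by
    simpa using norm_integral_le_of_norm_le_const (μ := p x b) (f := J) (ae_of_all _ hM)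
  calc |actionCost c p β J x b| ≤ |c x b| + |β * ∫ y, J y ∂p x b| := abs_add_le _ _
    _ = |c x b| + |β| * |∫ y, J y ∂p x b| := by rw [abs_mul]
    _ ≤ C + |β| * M := by gcongr; exact hC x b

lemma abs_actionCost_sub_le [∀ x b, IsProbabilityMeasure (p x b)] (hJ : Measurable J)
    (hJM : ∀ x, |J x| ≤ M) (hJ' : Measurable J') {M' : ℝ} (hJM' : ∀ x, |J' x| ≤ M')
    (hs : ∀ x, |J x - J' x| ≤ s) (x : X) (b : E) :
    |actionCost c p β J x b - actionCost c p β J' x b| ≤ |β| * s := by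
  rw [actionCost, actionCost, add_sub_add_left_eq_sub, ← mul_sub, abs_mul]
  exact mul_le_mul_of_nonneg_left (abs_integral_sub_integral_le
    (Integrable.of_bound hJ.aestronglyMeasurable M (ae_of_all _ hJM))
    (Integrable.of_bound hJ'.aestronglyMeasurable M' (ae_of_all _ hJM')) (ae_of_all _ hs))
    (abs_nonneg β)

/-- The modulus `ω_δ(r)` of the quantized kernel `Q_# p` in total variation. -/
def quantizedModulus [PseudoMetricSpace X] [PseudoMetricSpace E] (p : X → E → Measure X)
    (Q : X → X) (r : ℝ) : ℝ :=
  sSup {v : ℝ | ∃ x y : X, ∃ a b : E,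
    dist x y + dist a b ≤ r ∧ v = tvDist ((p x a).map Q) ((p y b).map Q)}

variable [PseudoMetricSpace X] [PseudoMetricSpace E] {Q : X → X}

lemma tvDist_map_le_quantizedModulus [∀ x b, IsProbabilityMeasure (p x b)] (hQ : Measurable Q)
    {x y : X} {a b : E} (h : dist x y + dist a b ≤ r) :
    tvDist ((p x a).map Q) ((p y b).map Q) ≤ quantizedModulus p Q r := by
  have : ∀ x b, IsProbabilityMeasure ((p x b).map Q) := fun x b =>
    Measure.isProbabilityMeasure_map hQ.aemeasurable
  refine le_csSup ⟨2, ?_⟩ ⟨x, y, a, b, h, rfl⟩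
  rintro _ ⟨x, y, a, b, -, rfl⟩
  exact tvDist_le_two

lemma oscillationLE_actionCost [∀ x b, IsProbabilityMeasure (p x b)] (hc : OscillationLE c r e)
    (hQ : Measurable Q) (hJ : Measurable J) (hJQ : ∀ x, J x = J (Q x)) (hM : ∀ x, |J x| ≤ M) :
    OscillationLE (actionCost c p β J) r (e + |β| * (M * quantizedModulus p Q r)) := by
  intro x y a b hr
  have : ∀ x b, IsProbabilityMeasure ((p x b).map Q) := fun x b =>
    Measure.isProbabilityMeasure_map hQ.aemeasurable
  have hpush : ∀ x b, ∫ z, J z ∂p x b = ∫ z, J z ∂(p x b).map Q := fun x b => by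
    rw [integral_map hQ.aemeasurable hJ.aestronglyMeasurable, ← funext hJQ]
  have hint : |∫ z, J z ∂p x a - ∫ z, J z ∂p y b| ≤ M * quantizedModulus p Q r := by
    rw [hpush, hpush]
    exact (abs_integral_sub_le_mul_tvDist hJ hM).trans
      (mul_le_mul_of_nonneg_left (tvDist_map_le_quantizedModulus hQ hr)
        ((abs_nonneg _).trans (hM x)))
  rw [actionCost, actionCost, add_sub_add_comm, ← mul_sub]
  calc _ ≤ |c x a - c y b| + |β| * |∫ z, J z ∂p x a - ∫ z, J z ∂p y b| :=
        (abs_add_le _ _).trans_eq (by rw [abs_mul])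
    _ ≤ e + |β| * (M * quantizedModulus p Q r) := by gcongr; exact hc x y a b hr

end ActionCost

section SetwiseContinuousGame

variable {X E : Type*} [MeasurableSpace X] [PseudoMetricSpace X] [PseudoMetricSpace E]
  {c : X → E → ℝ} {p : X → E → Measure X} {β C M r e s : ℝ} {J J' : X → ℝ}

/-- The standing assumptions on the data of one player: the one-stage cost is jointly continuous and
the transition probabilities are jointly setwise continuous. -/
structure IsSetwiseContinuousGame (c : X → E → ℝ) (p : X → E → Measure X) : Prop where
  continuous_cost : Continuous fun q : X × E => c q.1 q.2
  isProbabilityMeasure : ∀ x b, IsProbabilityMeasure (p x b)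
  isSetwiseContinuous : IsSetwiseContinuous fun q : X × E => p q.1 q.2

namespace IsSetwiseContinuousGame

lemma exists_abs_cost_le [CompactSpace X] [CompactSpace E] (hG : IsSetwiseContinuousGame c p) :
    ∃ C, ∀ x b, |c x b| ≤ C := by
  obtain ⟨C, hC⟩ := isCompact_univ.exists_bound_of_continuousOn hG.continuous_cost.continuousOn
  exact ⟨C, fun x b => hC (x, b) trivial⟩

lemma isBaireOne_actionCost [CompactSpace X] [CompactSpace E] (hG : IsSetwiseContinuousGame c p)
    (hM : ∀ x, |J x| ≤ M) : IsBaireOne fun q : X × E => actionCost c p β J q.1 q.2 := by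
  have := fun q : X × E => hG.isProbabilityMeasure q.1 q.2
  exact (IsBaireOne.of_continuous hG.continuous_cost).add
    ((hG.isSetwiseContinuous.isBaireOne_integral hM).const_mul β)

lemma integrable_actionCost [CompactSpace X] [CompactSpace E] [MeasurableSpace E]
    [OpensMeasurableSpace E] (hG : IsSetwiseContinuousGame c p) (hM : ∀ x, |J x| ≤ M)
    (μ : Measure E) [IsFiniteMeasure μ] (x : X) : Integrable (actionCost c p β J x) μ := by
  have := hG.isProbabilityMeasure
  obtain ⟨C, hC⟩ := hG.exists_abs_cost_le
  have hmeas : Measurable (actionCost c p β J x) :=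
    ((hG.isBaireOne_actionCost hM).comp (Continuous.prodMk_right x)).measurable
  exact Integrable.of_bound hmeas.aestronglyMeasurable _ (ae_of_all _ (abs_actionCost_le hC hM x))

lemma abs_integral_actionCost_sub_le [CompactSpace X] [CompactSpace E] [MeasurableSpace E]
    [OpensMeasurableSpace E] (hG : IsSetwiseContinuousGame c p) (hJ : Measurable J)
    (hM : ∀ x, |J x| ≤ M) (hJ' : Measurable J') {M' : ℝ} (hM' : ∀ x, |J' x| ≤ M')
    (hs : ∀ x, |J x - J' x| ≤ s) (hosc : OscillationLE (actionCost c p β J') r e)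
    {μ : Measure E} [IsProbabilityMeasure μ] {T T' : E → E} (hT : Measurable T)
    (hT' : Measurable T') {x x' : X} (h : ∀ b, dist x x' + dist (T b) (T' b) ≤ r) :
    |∫ b, actionCost c p β J x (T b) ∂μ - ∫ b, actionCost c p β J' x' (T' b) ∂μ| ≤
      |β| * s + e := by
  have := hG.isProbabilityMeasure
  refine abs_integral_sub_integral_le
    ((hG.integrable_actionCost hM (μ.map T) x).comp_measurable hT)
    ((hG.integrable_actionCost hM' (μ.map T') x').comp_measurable hT') (ae_of_all _ fun b => ?_)
  calc _ ≤ |actionCost c p β J x (T b) - actionCost c p β J' x (T b)| +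
          |actionCost c p β J' x (T b) - actionCost c p β J' x' (T' b)| := abs_sub_le _ _ _
    _ ≤ |β| * s + e :=
        add_le_add (abs_actionCost_sub_le hJ hM hJ' hM' hs x (T b)) (hosc _ _ _ _ (h b))

end IsSetwiseContinuousGame

end SetwiseContinuousGame

section Profiles

variable {ι : Type*} [Fintype ι] {A : ι → Type*} [∀ j, MeasurableSpace (A j)]

instance isProbabilityMeasure_update_dirac [DecidableEq ι] (μ : ∀ j, Measure (A j))
    [∀ j, IsProbabilityMeasure (μ j)] (i : ι) (a : A i) (j : ι) :
    IsProbabilityMeasure (Function.update μ i (Measure.dirac a) j) := by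
  rcases eq_or_ne j i with rfl | hj
  · rw [Function.update_self]; infer_instance
  · rw [Function.update_of_ne hj]; infer_instance

lemma map_update_pi [DecidableEq ι] (μ : ∀ j, Measure (A j)) [∀ j, IsProbabilityMeasure (μ j)]
    (i : ι) (a : A i) : (Measure.pi μ).map (fun b => Function.update b i a) =
      Measure.pi (Function.update μ i (Measure.dirac a)) := by
  let f : ∀ j, A j → A j := Function.update (fun _ => id) i fun _ => a
  have hf : ∀ j, Measurable (f j) ∧ (μ j).map (f j) = Function.update μ i (Measure.dirac a) j := by
    intro j
    rcases eq_or_ne j i with rfl | hj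
    · simp [f]
    · simp [f, hj, measurable_id]
  have hupdate : (fun b : ∀ j, A j => Function.update b i a) = fun b j => f j (b j) := by
    ext b j
    rcases eq_or_ne j i with rfl | hj
    · simp [f]
    · simp [f, hj]
  have : ∀ j, IsProbabilityMeasure ((μ j).map (f j)) := fun j =>
    Measure.isProbabilityMeasure_map (hf j).1.aemeasurable
  rw [hupdate, Measure.pi_map_pi fun j => (hf j).1.aemeasurable]
  exact congrArg Measure.pi (funext fun j => (hf j).2)

variable {X : Type*} [MeasurableSpace X] {c : X → (∀ j, A j) → ℝ}
  {p : X → (∀ j, A j) → Measure X} {β C M r e s : ℝ} {J J' : X → ℝ}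

/-- The expected discounted cost in state `x` when the players independently draw their actions
from the mixed actions `μ j` and the continuation cost is `J`. -/
def profileCost (c : X → (∀ j, A j) → ℝ) (p : X → (∀ j, A j) → Measure X) (β : ℝ) (J : X → ℝ)
    (μ : ∀ j, Measure (A j)) (x : X) : ℝ :=
  ∫ b, actionCost c p β J x b ∂Measure.pi μ

lemma abs_profileCost_le [∀ x b, IsProbabilityMeasure (p x b)] (hC : ∀ x b, |c x b| ≤ C)
    (hM : ∀ x, |J x| ≤ M) (μ : ∀ j, Measure (A j)) [∀ j, IsProbabilityMeasure (μ j)] (x : X) :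
    |profileCost c p β J μ x| ≤ C + |β| * M := by
  simpa [profileCost] using norm_integral_le_of_norm_le_const (μ := Measure.pi μ)
    (f := actionCost c p β J x) (ae_of_all _ (abs_actionCost_le hC hM x))

variable [PseudoMetricSpace X] [CompactSpace X] [∀ j, PseudoMetricSpace (A j)]
  [∀ j, CompactSpace (A j)] [∀ j, BorelSpace (A j)]

namespace IsSetwiseContinuousGame

lemma profileCost_update_dirac [DecidableEq ι] (hG : IsSetwiseContinuousGame c p)
    (hM : ∀ x, |J x| ≤ M) (μ : ∀ j, Measure (A j)) [∀ j, IsProbabilityMeasure (μ j)] (i : ι)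
    (a : A i) (x : X) :
    profileCost c p β J (Function.update μ i (Measure.dirac a)) x =
      ∫ b, actionCost c p β J x (Function.update b i a) ∂Measure.pi μ := by
  rw [profileCost, ← map_update_pi]
  refine integral_map measurable_update_left.aemeasurable ?_
  have : IsProbabilityMeasure ((Measure.pi μ).map fun b => Function.update b i a) :=
    Measure.isProbabilityMeasure_map measurable_update_left.aemeasurable
  exact (hG.integrable_actionCost hM _ x).aestronglyMeasurable

lemma measurable_profileCost [OpensMeasurableSpace X] (hG : IsSetwiseContinuousGame c p)
    (hM : ∀ x, |J x| ≤ M) (μ : ∀ j, Measure (A j)) [∀ j, IsProbabilityMeasure (μ j)] :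
    Measurable (profileCost c p β J μ) := by
  have := hG.isProbabilityMeasure
  obtain ⟨C, hC⟩ := hG.exists_abs_cost_le
  exact ((hG.isBaireOne_actionCost hM).integral (Measure.pi μ)
    fun q => abs_actionCost_le hC hM q.1 q.2).measurable

lemma measurable_iInf_profileCost [T2Space X] [OpensMeasurableSpace X] [DecidableEq ι]
    (hG : IsSetwiseContinuousGame c p) (hM : ∀ x, |J x| ≤ M) (μ : ∀ j, Measure (A j))
    [∀ j, IsProbabilityMeasure (μ j)] (i : ι) :
    Measurable fun x =>
      ⨅ a, profileCost c p β J (Function.update μ i (Measure.dirac a)) x := by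
  have := hG.isProbabilityMeasure
  have : Nonempty (A i) := (μ i).nonempty_of_neZero
  obtain ⟨C, hC⟩ := hG.exists_abs_cost_le
  have hupdate : Continuous fun q : (X × A i) × (∀ j, A j) =>
      (q.1.1, Function.update q.2 i q.1.2) := by fun_prop
  have hbaire : IsBaireOne fun q : X × A i =>
      ∫ b, actionCost c p β J q.1 (Function.update b i q.2) ∂Measure.pi μ :=
    ((hG.isBaireOne_actionCost hM).comp hupdate).integral (Measure.pi μ)
      fun q => abs_actionCost_le hC hM q.1.1 _
  simp only [hG.profileCost_update_dirac hM]
  refine hbaire.measurable_iInf (M := -(C + |β| * M)) fun q => ?_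
  rw [← hG.profileCost_update_dirac hM]
  exact (abs_le.1 (abs_profileCost_le hC hM _ q.1)).1

lemma abs_profileCost_sub_le (hG : IsSetwiseContinuousGame c p) (hJ : Measurable J)
    (hM : ∀ x, |J x| ≤ M) (hJ' : Measurable J') {M' : ℝ} (hM' : ∀ x, |J' x| ≤ M')
    (hs : ∀ x, |J x - J' x| ≤ s) (hosc : OscillationLE (actionCost c p β J') r e)
    (μ : ∀ j, Measure (A j)) [∀ j, IsProbabilityMeasure (μ j)] {x x' : X} (hx : dist x x' ≤ r) :
    |profileCost c p β J μ x - profileCost c p β J' μ x'| ≤ |β| * s + e :=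
  hG.abs_integral_actionCost_sub_le hJ hM hJ' hM' hs hosc measurable_id measurable_id
    fun b => by simpa using hx

lemma abs_profileCost_update_sub_le [DecidableEq ι] (hG : IsSetwiseContinuousGame c p)
    (hJ : Measurable J) (hM : ∀ x, |J x| ≤ M) (hJ' : Measurable J') {M' : ℝ}
    (hM' : ∀ x, |J' x| ≤ M') (hs : ∀ x, |J x - J' x| ≤ s)
    (hosc : OscillationLE (actionCost c p β J') r e) (μ : ∀ j, Measure (A j))
    [∀ j, IsProbabilityMeasure (μ j)] {i : ι} {a a' : A i} (ha : dist a a' ≤ r) (x : X) :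
    |profileCost c p β J (Function.update μ i (Measure.dirac a)) x -
      profileCost c p β J' (Function.update μ i (Measure.dirac a')) x| ≤ |β| * s + e := by
  rw [hG.profileCost_update_dirac hM, hG.profileCost_update_dirac hM']
  refine hG.abs_integral_actionCost_sub_le hJ hM hJ' hM' hs hosc measurable_update_left
    measurable_update_left fun b => ?_
  rw [dist_self, zero_add, dist_pi_le_iff (dist_nonneg.trans ha)]
  intro j
  rcases eq_or_ne j i with rfl | hj
  · simpa using ha
  · simpa [hj] using dist_nonneg.trans ha

end IsSetwiseContinuousGame

end Profiles

section FiniteBestResponse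

variable {X : Type*} [MetricSpace X] [MeasurableSpace X] {ι : Type*} [Fintype ι] [DecidableEq ι]
  {A : ι → Type*} [∀ j, MeasurableSpace (A j)]
  {c : X → (∀ j, A j) → ℝ} {p : X → (∀ j, A j) → Measure X} {β C δ e : ℝ} {S : Finset X}
  {Q : X → X} {ν : Measure X} {i : ι} {B : Finset (A i)} {π : X → ∀ j, Measure (A j)}
  {J Ji Js : X → ℝ}

/-- The part of the perfect equilibrium property of the finite model with states `S` and actions `B`
that concerns player `i`: `π` is the profile of policies and `J` the best-response value of player
`i`, both already extended from `S` to `X` by composition with `Q`. -/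
structure IsFiniteBestResponse (c : X → (∀ j, A j) → ℝ) (p : X → (∀ j, A j) → Measure X) (β : ℝ)
    (S : Finset X) (Q : X → X) (ν : Measure X) (i : ι) (B : Finset (A i))
    (π : X → ∀ j, Measure (A j)) (J : X → ℝ) : Prop where
  isProbabilityMeasure : ∀ x j, IsProbabilityMeasure (π x j)
  policy_eq : ∀ x, π x = π (Q x)
  value_eq : ∀ x, J x = J (Q x)
  value_eq_sInf : ∀ z ∈ S, J z = sInf {v | ∃ a ∈ B, v =
    ∫ x, profileCost c p β J (Function.update (π z) i (Measure.dirac a)) x ∂cellMeasure ν Q z}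
  value_eq_integral : ∀ z ∈ S, J z = ∫ x, profileCost c p β J (π z) x ∂cellMeasure ν Q z

namespace IsFiniteBestResponse

lemma abs_value_le [∀ x b, IsProbabilityMeasure (p x b)]
    (hB : IsFiniteBestResponse c p β S Q ν i B π J) (hC : ∀ x b, |c x b| ≤ C) (hβ : |β| < 1)
    (hQ : IsQuantization S Q ν δ) (x : X) : |J x| ≤ C / (1 - |β|) := by
  have := hB.isProbabilityMeasure
  obtain ⟨M, hM⟩ := hQ.exists_abs_le hB.value_eq
  refine abs_le_div_one_sub_of_contraction hM hβ (fun s hs x => ?_) x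
  have := hQ.isProbabilityMeasure_cellMeasure x
  rw [hB.value_eq x, hB.value_eq_integral _ (hQ.mem x)]
  simpa using norm_integral_le_of_norm_le_const (μ := cellMeasure ν Q (Q x))
    (f := profileCost c p β J (π (Q x))) (ae_of_all _ (abs_profileCost_le hC hs (π (Q x))))

variable [CompactSpace X] [BorelSpace X] [∀ j, PseudoMetricSpace (A j)] [∀ j, CompactSpace (A j)]
  [∀ j, BorelSpace (A j)]

lemma abs_policyValue_sub_le (hB : IsFiniteBestResponse c p β S Q ν i B π J)
    (hG : IsSetwiseContinuousGame c p) (hβ : |β| < 1) (hQ : IsQuantization S Q ν δ)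
    (hosc : OscillationLE (actionCost c p β J) (2 * δ) e) (hJi_bdd : ∃ M, ∀ x, |Ji x| ≤ M)
    (hJi : ∀ x, Ji x = profileCost c p β Ji (π x) x) (x : X) :
    |Ji x - J x| ≤ e / (1 - |β|) := by
  have := hB.isProbabilityMeasure
  have := hG.isProbabilityMeasure
  obtain ⟨C, hC⟩ := hG.exists_abs_cost_le
  obtain ⟨M, hM⟩ := hQ.exists_abs_le hB.value_eq
  obtain ⟨Mi, hMi⟩ := hJi_bdd
  have hJ_meas : Measurable J := hQ.measurable_of_eq_comp hB.value_eq
  have hJi_meas : Measurable Ji := by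
    rw [funext fun x => (hJi x).trans (by rw [hB.policy_eq])]
    exact hQ.measurable_bind fun z => hG.measurable_profileCost hMi (π z)
  refine abs_le_div_one_sub_of_contraction (M := Mi + M)
    (fun x => (abs_sub _ _).trans (add_le_add (hMi x) (hM x))) hβ (fun s hs x => ?_) x
  rw [hJi x, hB.policy_eq x, hB.value_eq x, hB.value_eq_integral _ (hQ.mem x), add_comm]
  exact hQ.abs_sub_integral_cellMeasure_le (hG.measurable_profileCost hM _)
    (abs_profileCost_le hC hM _) fun y hy => hG.abs_profileCost_sub_le hJi_meas hMi hJ_meas hM hs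
      hosc _ (hQ.dist_le_two_mul hy.symm)

-- Passing from a free action to a nearby net action and from the state to the points of its cell
-- costs one oscillation each.
lemma abs_bestResponseValue_sub_le (hB : IsFiniteBestResponse c p β S Q ν i B π J)
    (hG : IsSetwiseContinuousGame c p) (hβ : |β| < 1) (hQ : IsQuantization S Q ν δ)
    (hnet : ∀ a, ∃ b ∈ B, dist a b ≤ δ) (hosc : OscillationLE (actionCost c p β J) (2 * δ) e)
    (hJs_bdd : ∃ M, ∀ x, |Js x| ≤ M)
    (hJs : ∀ x, Js x =
      ⨅ a, profileCost c p β Js (Function.update (π x) i (Measure.dirac a)) x) (x : X) :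
    |Js x - J x| ≤ (e + e) / (1 - |β|) := by
  have := hB.isProbabilityMeasure
  have := hG.isProbabilityMeasure
  obtain ⟨C, hC⟩ := hG.exists_abs_cost_le
  obtain ⟨M, hM⟩ := hQ.exists_abs_le hB.value_eq
  obtain ⟨Ms, hMs⟩ := hJs_bdd
  have hJ_meas : Measurable J := hQ.measurable_of_eq_comp hB.value_eq
  have hJs_meas : Measurable Js := by
    rw [funext fun x => (hJs x).trans (by rw [hB.policy_eq])]
    exact hQ.measurable_bind fun z => hG.measurable_iInf_profileCost hMs (π z) i
  refine abs_le_div_one_sub_of_contraction (M := Ms + M)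
    (fun x => (abs_sub _ _).trans (add_le_add (hMs x) (hM x))) hβ (fun s hs x => ?_) x
  have : Nonempty (A i) := (π x i).nonempty_of_neZero
  rw [hJs x, hB.policy_eq x, hB.value_eq x, hB.value_eq_sInf _ (hQ.mem x)]
  refine abs_iInf_sub_sInf_le hnet ⟨-(C + |β| * Ms), Set.forall_mem_range.2 fun a =>
    (abs_le.1 (abs_profileCost_le hC hMs _ x)).1⟩ fun a b hab => ?_
  have haction := hG.abs_profileCost_update_sub_le hJs_meas hMs hJ_meas hM hs hosc (π (Q x))
    (by linarith [dist_nonneg.trans hab] : dist a b ≤ 2 * δ) x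
  have hcell := hQ.abs_sub_integral_cellMeasure_le (k := e) (x := x)
    (hG.measurable_profileCost (β := β) hM (Function.update (π (Q x)) i (Measure.dirac b)))
    (abs_profileCost_le hC hM _) fun y hy => by
      simpa using hG.abs_profileCost_sub_le (s := 0) hJ_meas hM hJ_meas hM (by simp) hosc _
        (hQ.dist_le_two_mul hy.symm)
  exact (abs_sub_le _ _ _).trans ((add_le_add haction hcell).trans_eq (by ring))

lemma abs_policyValue_sub_bestResponseValue_le (hB : IsFiniteBestResponse c p β S Q ν i B π J)
    (hG : IsSetwiseContinuousGame c p) (hC : ∀ x b, |c x b| ≤ C) (hβ : |β| < 1)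
    (hQ : IsQuantization S Q ν δ) (hnet : ∀ a, ∃ b ∈ B, dist a b ≤ δ)
    (hc : OscillationLE c (2 * δ) e) (hJs_bdd : ∃ M, ∀ x, |Js x| ≤ M)
    (hJs : ∀ x, Js x =
      ⨅ a, profileCost c p β Js (Function.update (π x) i (Measure.dirac a)) x)
    (hJi_bdd : ∃ M, ∀ x, |Ji x| ≤ M) (hJi : ∀ x, Ji x = profileCost c p β Ji (π x) x) (x : X) :
    |Ji x - Js x| ≤
      3 * (e + |β| * (C / (1 - |β|) * quantizedModulus p Q (2 * δ))) / (1 - |β|) := by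
  have := hG.isProbabilityMeasure
  have hosc := oscillationLE_actionCost (p := p) (β := β) hc hQ.measurable
    (hQ.measurable_of_eq_comp hB.value_eq) hB.value_eq (hB.abs_value_le hC hβ hQ)
  have hi := hB.abs_policyValue_sub_le hG hβ hQ hosc hJi_bdd hJi x
  have hs := hB.abs_bestResponseValue_sub_le hG hβ hQ hnet hosc hJs_bdd hJs x
  rw [abs_sub_comm] at hs
  exact (abs_sub_le _ _ _).trans ((add_le_add hi hs).trans_eq (by ring))

end IsFiniteBestResponse

end FiniteBestResponse

theorem discounted_equilibrium_cost_approximation_general {X : Type*} [MetricSpace X]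
    [CompactSpace X] [MeasurableSpace X] [BorelSpace X] {ι : Type*} [Fintype ι] [DecidableEq ι]
    {A : ι → Type*} [∀ j, PseudoMetricSpace (A j)] [∀ j, CompactSpace (A j)]
    [∀ j, MeasurableSpace (A j)] [∀ j, BorelSpace (A j)] {c : X → (∀ j, A j) → ℝ}
    {p : X → (∀ j, A j) → Measure X} (hG : IsSetwiseContinuousGame c p) {β : ℝ} (hβ : |β| < 1)
    {S : ℝ → Finset X} {Q : ℝ → X → X} {ν : ℝ → Measure X}
    (hQ : ∀ δ > (0 : ℝ), IsQuantization (S δ) (Q δ) (ν δ) δ)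
    (hquant : Tendsto (fun δ => quantizedModulus p (Q δ) (2 * δ)) (𝓝[>] 0) (𝓝 0))
    {i : ι} {B : ℝ → Finset (A i)} (hnet : ∀ δ > (0 : ℝ), ∀ a, ∃ b ∈ B δ, dist a b ≤ δ)
    {π : ℝ → X → ∀ j, Measure (A j)} {J Js Ji : ℝ → X → ℝ}
    (hB : ∀ δ > (0 : ℝ), IsFiniteBestResponse c p β (S δ) (Q δ) (ν δ) i (B δ) (π δ) (J δ))
    (hJs_bdd : ∀ δ > (0 : ℝ), ∃ M, ∀ x, |Js δ x| ≤ M)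
    (hJs : ∀ δ > (0 : ℝ), ∀ x, Js δ x =
      ⨅ a, profileCost c p β (Js δ) (Function.update (π δ x) i (Measure.dirac a)) x)
    (hJi_bdd : ∀ δ > (0 : ℝ), ∃ M, ∀ x, |Ji δ x| ≤ M)
    (hJi : ∀ δ > (0 : ℝ), ∀ x, Ji δ x = profileCost c p β (Ji δ) (π δ x) x) :
    Tendsto (fun δ => ⨆ x, |Ji δ x - Js δ x|) (𝓝[>] 0) (𝓝 0) := by
  obtain ⟨C, hC⟩ := hG.exists_abs_cost_le
  have hβ' : 0 < 1 - |β| := sub_pos.2 hβ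
  rw [Metric.tendsto_nhds]
  intro r hr
  have he : 0 < r * (1 - |β|) / 6 := by positivity
  have hlim : Tendsto (fun δ => 3 * (r * (1 - |β|) / 6 +
      |β| * (C / (1 - |β|) * quantizedModulus p (Q δ) (2 * δ))) / (1 - |β|)) (𝓝[>] 0)
      (𝓝 (r / 2)) := by
    convert ((((hquant.const_mul (C / (1 - |β|))).const_mul |β|).const_add
      (r * (1 - |β|) / 6)).const_mul 3).div_const (1 - |β|) using 2
    field_simp
    ring
  filter_upwards [self_mem_nhdsWithin, hlim.eventually_lt_const (half_lt_self hr),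
    hlim.eventually_const_lt (half_pos hr), eventually_oscillationLE hG.continuous_cost he]
    with δ hδ hlt hpos hosc
  rw [Real.dist_0_eq_abs, abs_of_nonneg (Real.iSup_nonneg fun x => abs_nonneg _)]
  refine (Real.iSup_le (fun x => ?_) hpos.le).trans_lt hlt
  exact (hB δ hδ).abs_policyValue_sub_bestResponseValue_le hG hC hβ (hQ δ hδ) (hnet δ hδ) hosc
    (hJs_bdd δ hδ) (hJs δ hδ) (hJi_bdd δ hδ) (hJi δ hδ) x

/-- Discounted-cost approximation of nonzero-sum Markov games (Theorem 5.2 of the paper):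
the discounted cost of each player under the extended finite-model stationary perfect
equilibrium converges uniformly to the original-model discounted best-response value
against the extended policies of the other players. -/
theorem discounted_equilibrium_cost_approximation
    -- compact metric state space
    (X : Type*) [MetricSpace X] [CompactSpace X] [Nonempty X]
    [MeasurableSpace X] [BorelSpace X]
    -- compact metric action spaces of the N players
    (N : ℕ) (A : Fin N → Type*) [∀ i, MetricSpace (A i)] [∀ i, CompactSpace (A i)]
    [∀ i, Nonempty (A i)] [∀ i, MeasurableSpace (A i)] [∀ i, BorelSpace (A i)]
    -- bounded continuous one-stage cost functions
    (c : Fin N → X → (∀ i, A i) → ℝ)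
    (hc : ∀ i, Continuous fun q : X × (∀ i, A i) => c i q.1 q.2)
    -- setwise continuous Borel stochastic kernel
    (p : X → (∀ i, A i) → Measure X)
    (hp_prob : ∀ x a, IsProbabilityMeasure (p x a))
    (hp_meas : ∀ D : Set X, MeasurableSet D →
      Measurable fun q : X × (∀ i, A i) => p q.1 q.2 D)
    (hp_setwise : ∀ D : Set X, MeasurableSet D →
      Continuous fun q : X × (∀ i, A i) => (p q.1 q.2 D).toReal)
    -- discount factor
    (β : ℝ) (hβ0 : 0 < β) (hβ1 : β < 1)
    -- quantization data: finite δ-nets, nearest-point quantizer, weighting measures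
    (Xd : ℝ → Finset X) (Q : ℝ → X → X) (Ad : ℝ → ∀ i, Finset (A i)) (ν : ℝ → Measure X)
    (hXd_net : ∀ δ > (0:ℝ), ∀ x : X, ∃ z ∈ Xd δ, dist x z ≤ δ)
    (hQ_mem : ∀ δ > (0:ℝ), ∀ x, Q δ x ∈ Xd δ)
    (hQ_near : ∀ δ > (0:ℝ), ∀ x, ∀ z ∈ Xd δ, dist x (Q δ x) ≤ dist x z)
    (hQ_meas : ∀ δ > (0:ℝ), Measurable (Q δ))
    (hAd_net : ∀ δ > (0:ℝ), ∀ i, ∀ a : A i, ∃ b ∈ Ad δ i, dist a b ≤ δ)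
    (hν_prob : ∀ δ > (0:ℝ), IsProbabilityMeasure (ν δ))
    (hν_pos : ∀ δ > (0:ℝ), ∀ z ∈ Xd δ, 0 < ν δ (Q δ ⁻¹' {z}))
    -- the quantization condition `lim_{δ→0} ω_δ(2δ) = 0`
    (hquant : Tendsto
      (fun δ : ℝ => sSup {v : ℝ | ∃ x y : X, ∃ a b : ∀ i, A i,
        dist x y + dist a b ≤ 2 * δ ∧
        v = tvDist ((p x a).map (Q δ)) ((p y b).map (Q δ))})
      (𝓝[>] 0) (𝓝 0))
    -- (already extended) stationary policies of the finite δ-model: probability measures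
    -- supported on the finite action nets, piecewise constant on quantization cells
    (π : ℝ → (i : Fin N) → X → Measure (A i))
    (hπ_prob : ∀ δ > (0:ℝ), ∀ i x, IsProbabilityMeasure (π δ i x))
    (hπ_supp : ∀ δ > (0:ℝ), ∀ i x, π δ i x (Ad δ i) = 1)
    (hπ_const : ∀ δ > (0:ℝ), ∀ i x, π δ i x = π δ i (Q δ x))
    -- the extended finite-model best-response values Ĵ*_δ(π^{*,-i}_δ;·)
    (Jd : ℝ → Fin N → X → ℝ)
    (hJd_const : ∀ δ > (0:ℝ), ∀ i x, Jd δ i x = Jd δ i (Q δ x))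
    -- fixed-point equation of the finite δ-model, per state of the net
    (hJd_rec : ∀ δ > (0:ℝ), ∀ i, ∀ z ∈ Xd δ,
      Jd δ i z = sInf {v : ℝ | ∃ a ∈ Ad δ i, v =
        ∫ x, (∫ b, (c i x b + β * ∫ y, Jd δ i y ∂(p x b))
            ∂(Measure.pi (Function.update (fun j => π δ j z) i (Measure.dirac a))))
          ∂(cellMeasure (ν δ) (Q δ) z)})
    -- the minimum is attained by the equilibrium mixed action π^{*,i}_δ(z)
    (hJd_attain : ∀ δ > (0:ℝ), ∀ i, ∀ z ∈ Xd δ,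
      Jd δ i z =
        ∫ x, (∫ b, (c i x b + β * ∫ y, Jd δ i y ∂(p x b))
            ∂(Measure.pi fun j => π δ j z))
          ∂(cellMeasure (ν δ) (Q δ) z))
    -- J*(π^{*,-i}_δ;·): the unique bounded fixed point of the original-model
    -- best-response operator against the extended policies
    (Js : ℝ → Fin N → X → ℝ)
    (hJs_bdd : ∀ δ > (0:ℝ), ∀ i, ∃ M : ℝ, ∀ x, |Js δ i x| ≤ M)
    (hJs_fix : ∀ δ > (0:ℝ), ∀ i, ∀ x : X,
      Js δ i x = ⨅ a : A i,
        ∫ b, (c i x b + β * ∫ y, Js δ i y ∂(p x b))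
          ∂(Measure.pi (Function.update (fun j => π δ j x) i (Measure.dirac a))))
    -- J^i(π*_δ;·): the unique bounded fixed point giving the discounted cost of player i
    -- in the original model under the extended joint equilibrium policy
    (Ji : ℝ → Fin N → X → ℝ)
    (hJi_bdd : ∀ δ > (0:ℝ), ∀ i, ∃ M : ℝ, ∀ x, |Ji δ i x| ≤ M)
    (hJi_fix : ∀ δ > (0:ℝ), ∀ i, ∀ x : X,
      Ji δ i x =
        ∫ b, (c i x b + β * ∫ y, Ji δ i y ∂(p x b))
          ∂(Measure.pi fun j => π δ j x)) :
    -- conclusion: uniform convergence as δ → 0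
    ∀ i : Fin N,
      Tendsto (fun δ : ℝ => ⨆ x : X, |Ji δ i x - Js δ i x|) (𝓝[>] 0) (𝓝 0) := by
  exact fun i => discounted_equilibrium_cost_approximation_general
    (π := fun δ x j => π δ j x) (J := fun δ => Jd δ i) ⟨hc i, hp_prob, hp_setwise⟩
    ((abs_of_pos hβ0).trans_lt hβ1)
    (fun δ hδ => .of_dist_le_dist (hQ_meas δ hδ) (hQ_mem δ hδ) (hQ_near δ hδ) (hXd_net δ hδ)
      (have := hν_prob δ hδ; inferInstance) (hν_pos δ hδ))
    hquant (fun δ hδ => hAd_net δ hδ i)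
    (fun δ hδ => ⟨fun x j => hπ_prob δ hδ j x, fun x => funext fun j => hπ_const δ hδ j x,
      hJd_const δ hδ i, hJd_rec δ hδ i, hJd_attain δ hδ i⟩)
    (fun δ hδ => hJs_bdd δ hδ i) (fun δ hδ => hJs_fix δ hδ i) (fun δ hδ => hJi_bdd δ hδ i)
    (fun δ hδ => hJi_fix δ hδ i)

end
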